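/- Let μ > 0 and ℏ > 0 be real constants and let F, G : ℝ → ℝ be continuous. Then the time kernel factor T_S is differentiable in v, differentiable in u after differentiating in v, and satisfies the canonical time kernel equation: for all real u, v, ∂²T_S/∂u∂v (u,v) = (μ/(2ℏ²))·F(u)·G(v)·T_S(u,v); equivalently, −(2ℏ²/μ)·∂²T_S/∂u∂v (u,v) + F(u)·G(v)·T_S(u,v) = 0. -/

import Mathlib

/-- The confluent hypergeometric limit function ₀F₁(;1;z) = Σ_{n=0}^∞ zⁿ/(n!)². -/
noncomputable def hyp0F1one (z : ℝ) : ℝ := ∑' n : ℕ, z ^ n / ((n.factorial : ℝ)) ^ 2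

/-- The time kernel factor T_S(u,v). -/
noncomputable def TS (μ hbar : ℝ) (F G : ℝ → ℝ) (u v : ℝ) : ℝ :=
  u / 4 + μ / (2 * hbar ^ 2) *
    ∫ v' in (0:ℝ)..v, G v' *
      ∫ u' in (0:ℝ)..u, F u' * (u' / 4) *
        hyp0F1one (μ / (2 * hbar ^ 2) * (∫ s in v'..v, G s) * (∫ s in u'..u, F s))

/-!
Put `J(u, x) = ∫ s in a..u, F s * g s * ₀F₁(;1; x * ∫ t in s..u, F t)`. The substitution
`y = c * ∫ t in v'..v, G t` turns the double integral into `T(u, v) = g u + ∫ y in 0..cV, J(u, y)`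
with `V = ∫ t in b..v, G t`, so `∂T/∂v = c G(v) J(u, cV)`, and it remains to show
`∂J/∂u (u, x) = F(u) (g u + ∫ y in 0..x, J(u, y))`. The boundary term of the Leibniz rule is
`F(u) g(u)` because `₀F₁(;1;0) = 1`; the other term matches because the Bessel–Clifford functions
`Cₖ(z) = ∑ zⁿ / (n! (n + k)!)` satisfy both `C₀' = C₁`, which comes from the `u`-derivative, and
`∫ y in 0..x, C₀(r y) = x C₁(r x)`, which comes from the `y`-integral.
-/

open MeasureTheory Function Set intervalIntegral
open scoped Nat NNReal

section PowerSeries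

variable {𝕜 : Type*} [NontriviallyNormedField 𝕜] [CompleteSpace 𝕜]

theorem hasDerivAt_tsum_mul_pow {a : ℕ → 𝕜} (ha : ∀ r : ℝ≥0, Summable fun n ↦ ‖a n‖ * r ^ n)
    (z : 𝕜) :
    HasDerivAt (fun z ↦ ∑' n, a n * z ^ n) (∑' n : ℕ, (n + 1) * a (n + 1) * z ^ n) z := by
  set p := FormalMultilinearSeries.ofScalars 𝕜 a
  have hradius : p.radius = ⊤ := p.radius_eq_top_of_summable_norm fun r ↦ by
    simpa only [p, FormalMultilinearSeries.ofScalars_norm] using ha r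
  have hseries : HasFPowerSeriesOnBall (fun z ↦ ∑' n, a n * z ^ n) p 0 ⊤ := by
    have h := p.hasFPowerSeriesOnBall (hradius ▸ ENNReal.zero_lt_top)
    rw [hradius] at h
    exact h.congr fun y _ ↦ FormalMultilinearSeries.ofScalars_sum_eq a y
  have hz : z ∈ Metric.eball (0 : 𝕜) ⊤ := by simp
  refine (hseries.analyticAt_of_mem hz).differentiableAt.hasDerivAt.congr_deriv ?_
  have hsum := (hseries.fderiv.hasSum hz).mapL (ContinuousLinearMap.apply 𝕜 𝕜 (1 : 𝕜))
  simp only [zero_add] at hsum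
  refine hsum.tsum_eq.symm.trans (tsum_congr fun n ↦ ?_)
  simp [p, mul_comm]

end PowerSeries

section BesselClifford

variable {𝕜 : Type*} [RCLike 𝕜]

/-- The Bessel–Clifford function `∑ zⁿ / (n! (n + k)!)` of order `k`. -/
noncomputable def besselClifford (k : ℕ) (z : 𝕜) : 𝕜 :=
  ∑' n : ℕ, ((n ! : 𝕜) * (n + k)!)⁻¹ * z ^ n

theorem summable_norm_besselClifford (k : ℕ) (r : ℝ≥0) :
    Summable fun n : ℕ ↦ ‖((n ! : 𝕜) * (n + k)!)⁻¹‖ * (r : ℝ) ^ n := by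
  refine (Real.summable_pow_div_factorial r).of_nonneg_of_le (fun n ↦ by positivity) fun n ↦ ?_
  have hfact : (1 : ℝ) ≤ (n + k)! := mod_cast (n + k).factorial_pos
  rw [norm_inv, norm_mul, RCLike.norm_natCast, RCLike.norm_natCast, inv_mul_eq_div]
  gcongr
  exact le_mul_of_one_le_right (by positivity) hfact

theorem hasSum_besselClifford (k : ℕ) (z : 𝕜) :
    HasSum (fun n : ℕ ↦ ((n ! : 𝕜) * (n + k)!)⁻¹ * z ^ n) (besselClifford k z) := by
  refine Summable.hasSum (.of_norm ?_)
  simpa only [norm_mul, norm_pow, coe_nnnorm] using summable_norm_besselClifford (𝕜 := 𝕜) k ‖z‖₊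

theorem hasDerivAt_besselClifford (k : ℕ) (z : 𝕜) :
    HasDerivAt (besselClifford k) (besselClifford (k + 1) z) z := by
  have hderiv := hasDerivAt_tsum_mul_pow (summable_norm_besselClifford (𝕜 := 𝕜) k) z
  refine hderiv.congr_deriv (tsum_congr fun n ↦ ?_)
  rw [show n + 1 + k = n + (k + 1) by lia, Nat.factorial_succ n]
  push_cast
  field_simp

@[fun_prop]
theorem continuous_besselClifford (k : ℕ) : Continuous (besselClifford k : 𝕜 → 𝕜) :=
  continuous_iff_continuousAt.2 fun z ↦ (hasDerivAt_besselClifford k z).continuousAt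

theorem besselClifford_zero_right (k : ℕ) : besselClifford k (0 : 𝕜) = (k ! : 𝕜)⁻¹ := by
  rw [besselClifford, tsum_eq_single 0 fun n hn ↦ by simp [hn]]
  simp

theorem mul_besselClifford_add_two (k : ℕ) (z : 𝕜) :
    z * besselClifford (k + 2) z + (k + 1) * besselClifford (k + 1) z = besselClifford k z := by
  have hshift : HasSum (fun n : ℕ ↦ (n : 𝕜) * ((n ! : 𝕜) * (n + (k + 1))!)⁻¹ * z ^ n)
      (z * besselClifford (k + 2) z) := by
    refine (hasSum_nat_add_iff' 1).1 ?_
    simp only [Finset.range_one, Finset.sum_singleton, Nat.cast_zero, zero_mul, sub_zero]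
    refine ((hasSum_besselClifford (k + 2) z).mul_left z).congr_fun fun n ↦ ?_
    rw [show n + 1 + (k + 1) = n + (k + 2) by lia, Nat.factorial_succ n]
    push_cast
    field_simp
    ring
  refine (hshift.add ((hasSum_besselClifford (k + 1) z).mul_left (k + 1 : 𝕜))).unique ?_
  refine (hasSum_besselClifford k z).congr_fun fun n ↦ ?_
  rw [← add_assoc n k 1, Nat.factorial_succ (n + k)]
  have hne : (n + k + 1 : 𝕜) ≠ 0 := mod_cast (n + k).succ_ne_zero
  push_cast
  field_simp
  ring

theorem hasDerivAt_pow_mul_besselClifford (k : ℕ) (r x : 𝕜) :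
    HasDerivAt (fun y ↦ y ^ (k + 1) * besselClifford (k + 1) (y * r))
      (x ^ k * besselClifford k (x * r)) x := by
  have hcomp : HasDerivAt (fun y ↦ besselClifford (k + 1) (y * r))
      (besselClifford (k + 2) (x * r) * r) x :=
    (hasDerivAt_besselClifford (k + 1) (x * r)).comp (h := fun y ↦ y * r) x
      (hasDerivAt_mul_const r)
  refine ((hasDerivAt_pow (k + 1) x).mul hcomp).congr_deriv ?_
  rw [← mul_besselClifford_add_two k (x * r)]
  push_cast
  ring

theorem integral_pow_mul_besselClifford (k : ℕ) (r x : ℝ) :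
    ∫ y in 0..x, y ^ k * besselClifford k (y * r) =
      x ^ (k + 1) * besselClifford (k + 1) (x * r) := by
  rw [integral_eq_sub_of_hasDerivAt (fun y _ ↦ hasDerivAt_pow_mul_besselClifford k r y)
    (Continuous.intervalIntegrable (by fun_prop) _ _)]
  simp

theorem hyp0F1one_eq_besselClifford : hyp0F1one = besselClifford 0 := by
  ext z
  exact tsum_congr fun n ↦ by rw [add_zero, ← sq, div_eq_inv_mul]

end BesselClifford

section IntervalIntegral

variable {E : Type*} [NormedAddCommGroup E] [NormedSpace ℝ E]

@[fun_prop]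
theorem continuous_intervalIntegral_of_continuous_limits {X : Type*} [TopologicalSpace X]
    {f : ℝ → E} {a b : X → ℝ} (hf : Continuous f) (ha : Continuous a) (hb : Continuous b) :
    Continuous fun x ↦ ∫ t in a x..b x, f t := by
  have hsub (x : X) : ∫ t in a x..b x, f t = (∫ t in 0..b x, f t) - ∫ t in 0..a x, f t :=
    (integral_interval_sub_left (hf.intervalIntegrable _ _) (hf.intervalIntegrable _ _)).symm
  simp only [hsub]
  fun_prop

theorem hasDerivAt_intervalIntegral_param {k k' : ℝ → ℝ → E} (hk : ∀ w, Continuous (k w))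
    (hk' : Continuous (uncurry k')) (hderiv : ∀ w s, HasDerivAt (k · s) (k' w s) w) (a b w : ℝ) :
    HasDerivAt (fun w ↦ ∫ s in a..b, k w s) (∫ s in a..b, k' w s) w := by
  obtain ⟨C, hC⟩ := ((isCompact_closedBall w 1).prod
    (isCompact_uIcc (a := a) (b := b))).exists_bound_of_continuousOn hk'.continuousOn
  refine (hasDerivAt_integral_of_dominated_loc_of_deriv_le (bound := fun _ ↦ C)
    (Metric.closedBall_mem_nhds w one_pos)
    (.of_forall fun x ↦ (hk x).aestronglyMeasurable)
    ((hk w).intervalIntegrable _ _)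
    (hk'.uncurry_left w).aestronglyMeasurable ?_ intervalIntegrable_const
    (ae_of_all _ fun s _ x _ ↦ hderiv x s)).2
  exact ae_of_all _ fun s hs x hx ↦ hC (x, s) ⟨hx, uIoc_subset_uIcc hs⟩

theorem hasDerivAt_intervalIntegral_right_param [CompleteSpace E] {k k' : ℝ → ℝ → E}
    (hk : Continuous (uncurry k)) (hk' : Continuous (uncurry k'))
    (hderiv : ∀ w s, HasDerivAt (k · s) (k' w s) w) (a u : ℝ) :
    HasDerivAt (fun u ↦ ∫ s in a..u, k u s) (k u u + ∫ s in a..u, k' u s) u := by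
  let toSpan := ContinuousLinearMap.toSpanSingletonCLE (𝕜 := ℝ) (E := E)
  have hfderiv := hasStrictFDerivAt_uncurry_coprod (𝕜 := ℝ) (u := (u, u))
    (f := fun x w ↦ ∫ s in a..x, k w s)
    (f₁ := fun x w ↦ toSpan (k w x)) (f₂ := fun x w ↦ toSpan (∫ s in a..x, k' w s))
    (.of_forall fun p ↦
      ((hk.uncurry_left p.2).integral_hasStrictDerivAt a p.1).hasDerivAt.hasFDerivAt)
    (.of_forall fun p ↦
      (hasDerivAt_intervalIntegral_param hk.uncurry_left hk' hderiv a p.1 p.2).hasFDerivAt)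
    (toSpan.continuous.comp (hk.comp continuous_swap)).continuousAt
    (toSpan.continuous.comp
      ((continuous_parametric_primitive_of_continuous hk').comp continuous_swap)).continuousAt
  have hdiag : HasDerivAt (fun x : ℝ ↦ (x, x)) (1, 1) u :=
    (hasDerivAt_id u).prodMk (hasDerivAt_id u)
  simpa [toSpan, comp_def, HasUncurry.uncurry, uncurry] using
    HasFDerivAt.comp_hasDerivAt (f := fun x : ℝ ↦ (x, x)) u hfderiv.hasFDerivAt hdiag

theorem integral_smul_comp_integral_left {f : ℝ → E} {G : ℝ → ℝ} (hf : Continuous f)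
    (hG : Continuous G) (a b : ℝ) :
    ∫ x in a..b, G x • f (∫ t in x..b, G t) = ∫ y in 0..∫ t in a..b, G t, f y := by
  have hderiv (x : ℝ) : HasDerivAt (fun x ↦ ∫ t in x..b, G t) (-G x) x :=
    integral_hasDerivAt_left (hG.intervalIntegrable _ _)
      hG.stronglyMeasurable.stronglyMeasurableAtFilter hG.continuousAt
  calc ∫ x in a..b, G x • f (∫ t in x..b, G t)
      = -∫ x in a..b, -G x • f (∫ t in x..b, G t) := by
        simp only [neg_smul, intervalIntegral.integral_neg, neg_neg]
    _ = -∫ y in (∫ t in a..b, G t)..∫ t in b..b, G t, f y :=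
        congrArg Neg.neg (integral_deriv_smul_comp (fun x _ ↦ hderiv x) hG.neg.continuousOn hf)
    _ = ∫ y in 0..∫ t in a..b, G t, f y := by rw [integral_same, ← integral_symm]

end IntervalIntegral

section Goursat

/-- The integral over `s` of the data `F s * g s` against the Riemann function
`₀F₁(;1; x · ∫ t in s..u, F t)`. The variable `x` stands for the other argument of the Riemann
function, `c · ∫ t in s'..v, G t` in `goursatSolution`. -/
noncomputable def goursatIntegral (F g : ℝ → ℝ) (a u x : ℝ) : ℝ :=
  ∫ s in a..u, F s * g s * besselClifford 0 (x * ∫ t in s..u, F t)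

/-- Riemann's formula for the solution of the Goursat problem `∂²T/∂u∂v = c F(u) G(v) T` with
`T(u, b) = g u` and `T(a, v) = g a`. The time kernel factor is the case `a = b = 0`, `g s = s / 4`,
`c = μ / (2ℏ²)`. -/
noncomputable def goursatSolution (c : ℝ) (F G g : ℝ → ℝ) (a b u v : ℝ) : ℝ :=
  g u + c * ∫ s in b..v, G s * goursatIntegral F g a u (c * ∫ t in s..v, G t)

variable {F G g : ℝ → ℝ} (hF : Continuous F) (hG : Continuous G) (hg : Continuous g)
include hF hg

@[fun_prop]
theorem continuous_goursatIntegral (a u : ℝ) : Continuous (goursatIntegral F g a u) := by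
  unfold goursatIntegral
  refine continuous_parametric_intervalIntegral_of_continuous' ?_ a u
  simp only [uncurry_def]
  fun_prop

theorem integral_goursatIntegral (a u x : ℝ) :
    ∫ y in 0..x, goursatIntegral F g a u y =
      ∫ s in a..u, F s * g s * (x * besselClifford 1 (x * ∫ t in s..u, F t)) := by
  have hint : Continuous (uncurry fun y s ↦
      F s * g s * besselClifford 0 (y * ∫ t in s..u, F t)) := by
    simp only [uncurry_def]
    fun_prop
  simp only [goursatIntegral]
  rw [intervalIntegral_intervalIntegral_swap <| (hint.continuousOn.integrableOn_compact
    (isCompact_uIcc.prod isCompact_uIcc)).mono_set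
      (prod_mono uIoc_subset_uIcc uIoc_subset_uIcc)]
  refine integral_congr fun s _ ↦ ?_
  have hkernel := integral_pow_mul_besselClifford 0 (∫ t in s..u, F t) x
  simp only [pow_zero, one_mul, zero_add, pow_one] at hkernel
  simp only [intervalIntegral.integral_const_mul, hkernel]

theorem hasDerivAt_goursatIntegral (a u x : ℝ) :
    HasDerivAt (goursatIntegral F g a · x)
      (F u * (g u + ∫ y in 0..x, goursatIntegral F g a u y)) u := by
  have hkernel (w s : ℝ) :
      HasDerivAt (fun w ↦ F s * g s * besselClifford 0 (x * ∫ t in s..w, F t))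
        (F s * g s * (besselClifford 1 (x * ∫ t in s..w, F t) * (x * F w))) w :=
    ((hasDerivAt_besselClifford 0 _).comp w
      ((hF.integral_hasStrictDerivAt s w).hasDerivAt.const_mul x)).const_mul _
  refine (hasDerivAt_intervalIntegral_right_param (by simp only [uncurry_def]; fun_prop)
    (by simp only [uncurry_def]; fun_prop) hkernel a u).congr_deriv ?_
  rw [integral_goursatIntegral hF hg, mul_add, ← intervalIntegral.integral_const_mul (F u)]
  congr 1
  · simp [besselClifford_zero_right]
  · exact integral_congr fun s _ ↦ by ring

include hG

theorem goursatSolution_eq_integral (c a b u v : ℝ) :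
    goursatSolution c F G g a b u v =
      g u + ∫ y in 0..c * ∫ t in b..v, G t, goursatIntegral F g a u y := by
  have hsubst := integral_smul_comp_integral_left
    (f := fun y ↦ goursatIntegral F g a u (c * y)) (by fun_prop) hG b v
  simp only [smul_eq_mul] at hsubst
  rw [goursatSolution, hsubst, mul_integral_comp_mul_left, mul_zero]

theorem hasDerivAt_goursatSolution_right (c a b u v : ℝ) :
    HasDerivAt (goursatSolution c F G g a b u ·)
      (goursatIntegral F g a u (c * ∫ t in b..v, G t) * (c * G v)) v := by
  simp only [goursatSolution_eq_integral hF hG hg]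
  exact (((continuous_goursatIntegral hF hg a u).integral_hasStrictDerivAt 0 _).hasDerivAt.comp v
    ((hG.integral_hasStrictDerivAt b v).hasDerivAt.const_mul c)).const_add _

theorem hasDerivAt_deriv_goursatSolution (c a b u v : ℝ) :
    HasDerivAt (fun u ↦ deriv (goursatSolution c F G g a b u ·) v)
      (c * F u * G v * goursatSolution c F G g a b u v) u := by
  simp only [fun u ↦ (hasDerivAt_goursatSolution_right hF hG hg c a b u v).deriv]
  refine ((hasDerivAt_goursatIntegral hF hg a u _).mul_const (c * G v)).congr_deriv ?_
  rw [goursatSolution_eq_integral hF hG hg]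
  ring

end Goursat

theorem TS_eq_goursatSolution (μ hbar : ℝ) (F G : ℝ → ℝ) :
    TS μ hbar F G = goursatSolution (μ / (2 * hbar ^ 2)) F G (fun s ↦ s / 4) 0 0 := by
  ext u v
  simp only [TS, goursatSolution, goursatIntegral, hyp0F1one_eq_besselClifford]

theorem stmt10_general (c a b : ℝ) {F G g : ℝ → ℝ} (hF : Continuous F) (hG : Continuous G)
    (hg : Continuous g) :
    (∀ u v : ℝ, DifferentiableAt ℝ (fun w : ℝ ↦ goursatSolution c F G g a b u w) v) ∧
    (∀ u v : ℝ, DifferentiableAt ℝ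
      (fun w : ℝ ↦ deriv (fun w' : ℝ ↦ goursatSolution c F G g a b w w') v) u) ∧
    (∀ u v : ℝ,
      deriv (fun w : ℝ ↦ deriv (fun w' : ℝ ↦ goursatSolution c F G g a b w w') v) u =
        c * F u * G v * goursatSolution c F G g a b u v) :=
  ⟨fun u v ↦ (hasDerivAt_goursatSolution_right hF hG hg c a b u v).differentiableAt,
    fun u v ↦ (hasDerivAt_deriv_goursatSolution hF hG hg c a b u v).differentiableAt,
    fun u v ↦ (hasDerivAt_deriv_goursatSolution hF hG hg c a b u v).deriv⟩

theorem stmt10 (μ hbar : ℝ) (hμ : 0 < μ) (hhbar : 0 < hbar)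
    (F G : ℝ → ℝ) (hF : Continuous F) (hG : Continuous G) :
    (∀ u v : ℝ, DifferentiableAt ℝ (fun w : ℝ => TS μ hbar F G u w) v) ∧
    (∀ u v : ℝ, DifferentiableAt ℝ
      (fun w : ℝ => deriv (fun w' : ℝ => TS μ hbar F G w w') v) u) ∧
    (∀ u v : ℝ,
      deriv (fun w : ℝ => deriv (fun w' : ℝ => TS μ hbar F G w w') v) u =
        μ / (2 * hbar ^ 2) * F u * G v * TS μ hbar F G u v) := by
  rw [TS_eq_goursatSolution]
  exact stmt10_general _ 0 0 hF hG (by fun_prop)
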